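/- Fix an integer j ≥ 1 and let D be the diagonal matrix diag(z^j, z^{−j}) over A (note z is a unit of A). Let N be a 2×2 matrix with entries in O_U such that all entries of D·N·D^{−1} lie in O_V. Then N is invertible over O_U (i.e. det N is a unit of O_U) and D·N·D^{−1} is invertible over O_V if and only if the coefficient of z⁰u⁰ in det N is nonzero. (This identifies the automorphism group G_{j,k}^{(n)} of O(j) ⊕ O(−j) on Z_k^{(n)} as the complement of the vanishing locus of the map det₀ given by restricting the determinant to the zero section.) -/

import Mathlib

set_option synthInstance.maxHeartbeats 1000000
set_option maxHeartbeats 1000000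

noncomputable section

/-- The ring of Laurent polynomials `ℂ[z,z⁻¹]`. -/
abbrev Lz : Type := LaurentPolynomial ℂ

/-- The ring `P = ℂ[z,z⁻¹][[u]]` of formal power series in `u` with Laurent
polynomial coefficients. -/
abbrev Pz : Type := PowerSeries Lz

/-- The monomial `z^l u^i` as an element of `P`. -/
def mon (l : ℤ) (i : ℕ) : Pz := PowerSeries.monomial (R := Lz) i (LaurentPolynomial.T l)

/-- The coefficient of `z^l` in a Laurent polynomial, as a `ℂ`-linear map. -/
def coeffL (l : ℤ) : Lz →ₗ[ℂ] ℂ :=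
  (Finsupp.lapply l).comp (AddMonoidAlgebra.coeffLinearEquiv ℂ).toLinearMap

/-- The coefficient of `z^l u^i` in an element of `P`, as a `ℂ`-linear map. -/
def coeffP (l : ℤ) (i : ℕ) : Pz →ₗ[ℂ] ℂ :=
  (coeffL l).comp ((PowerSeries.coeff (R := Lz) i).restrictScalars ℂ)

/-- The ideal `(u^{n+1})` of `P`. -/
def In (n : ℕ) : Ideal Pz := Ideal.span {(PowerSeries.X : Pz) ^ (n + 1)}

/-- The ring `A = ℂ[z,z⁻¹][u]/(u^{n+1})`, the coordinate ring of the overlap of the two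
standard charts of the `n`-th infinitesimal neighborhood `Z_k^{(n)}`. -/
abbrev Aq (n : ℕ) : Type := Pz ⧸ In n

/-- The quotient map `P → A`. -/
def toA (n : ℕ) : Pz →+* Aq n := Ideal.Quotient.mk (In n)

/-- The monomial `z^l u^i` as an element of `A`. -/
def monA (n : ℕ) (l : ℤ) (i : ℕ) : Aq n := toA n (mon l i)

/-- `O_U ⊆ A`: the `ℂ`-span of the monomials `z^l u^i` with `l ≥ 0`, `0 ≤ i ≤ n`. -/
def OU (n : ℕ) : Submodule ℂ (Aq n) :=
  Submodule.span ℂ {x | ∃ l : ℤ, ∃ i : ℕ, 0 ≤ l ∧ i ≤ n ∧ x = monA n l i}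

/-- `O_V ⊆ A`: the `ℂ`-span of the monomials `z^l u^i` with `l ≤ k·i`, `0 ≤ i ≤ n`. -/
def OV (k n : ℕ) : Submodule ℂ (Aq n) :=
  Submodule.span ℂ {x | ∃ l : ℤ, ∃ i : ℕ, l ≤ k * i ∧ i ≤ n ∧ x = monA n l i}

/-- The submodule `a·S` obtained from a submodule `S` by multiplying by a fixed element `a`. -/
def msmul {n : ℕ} (a : Aq n) (S : Submodule ℂ (Aq n)) : Submodule ℂ (Aq n) :=
  Submodule.map (LinearMap.mulLeft ℂ a) S

/-- The coefficient of the monomial `z^0 u^0` in an element of `A` (well defined since the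
ideal `(u^{n+1})` has vanishing `u^0`-coefficient). -/
def c00 (n : ℕ) : Aq n →ₗ[ℂ] ℂ := by
  refine (Submodule.liftQ ((In n).restrictScalars ℂ) (coeffP 0 0) ?_).comp
    (Submodule.Quotient.restrictScalarsEquiv ℂ ((In n) : Submodule Pz Pz)).symm.toLinearMap
  intro x hx
  simp only [Submodule.restrictScalars_mem, In, Ideal.mem_span_singleton] at hx
  obtain ⟨g, rfl⟩ := hx
  simp only [LinearMap.mem_ker, coeffP, coeffL, LinearMap.comp_apply,
    LinearMap.restrictScalars_apply]
  have h : (PowerSeries.coeff (R := Lz) 0) ((PowerSeries.X : Pz) ^ (n + 1) * g) = 0 := by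
    rw [PowerSeries.coeff_zero_eq_constantCoeff, map_mul, map_pow,
      PowerSeries.constantCoeff_X, zero_pow (Nat.succ_ne_zero n), zero_mul]
  rw [h]
  simp

/-- Evaluation at `u = 0`. -/
def epsA (n : ℕ) : Aq n →+* Lz :=
  Ideal.Quotient.lift (In n) (PowerSeries.constantCoeff (R := Lz)) (by
    intro x hx
    simp only [In, Ideal.mem_span_singleton] at hx
    obtain ⟨g, rfl⟩ := hx
    rw [map_mul, map_pow, PowerSeries.constantCoeff_X, zero_pow (Nat.succ_ne_zero n), zero_mul])

lemma epsA_toA (n : ℕ) (p : Pz) : epsA n (toA n p) = PowerSeries.constantCoeff (R := Lz) p := rfl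

lemma toA_surj (n : ℕ) (x : Aq n) : ∃ p, toA n p = x := Ideal.Quotient.mk_surjective x

lemma toA_smul (n : ℕ) (c : ℂ) (p : Pz) : toA n (c • p) = c • toA n p := rfl

lemma epsA_smul (n : ℕ) (c : ℂ) (x : Aq n) : epsA n (c • x) = c • epsA n x := by
  obtain ⟨p, rfl⟩ := toA_surj n x
  rw [← toA_smul, epsA_toA, epsA_toA]
  rfl

lemma c00_eq (n : ℕ) (x : Aq n) : c00 n x = coeffL 0 (epsA n x) := by
  obtain ⟨p, rfl⟩ := toA_surj n x
  rw [epsA_toA, ← PowerSeries.coeff_zero_eq_constantCoeff_apply]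
  have h : c00 n (toA n p) = coeffP 0 0 p := rfl
  rw [h]
  rfl

lemma coeffL_T (l m : ℤ) : coeffL l (LaurentPolynomial.T m) = if m = l then 1 else 0 := by
  have : coeffL l (LaurentPolynomial.T m) = (Finsupp.single m (1 : ℂ)) l := rfl
  rw [this, Finsupp.single_apply]

lemma Lz_ext (f g : Lz) (h : ∀ l, coeffL l f = coeffL l g) : f = g := by
  apply (AddMonoidAlgebra.coeffLinearEquiv ℂ).injective
  exact Finsupp.ext h

lemma eps_monA (n : ℕ) (l : ℤ) (i : ℕ) :
    epsA n (monA n l i) = if i = 0 then LaurentPolynomial.T l else 0 := by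
  rw [monA, epsA_toA, mon, ← PowerSeries.coeff_zero_eq_constantCoeff_apply,
    PowerSeries.coeff_monomial]
  simp [eq_comm]

lemma monA_mul (n : ℕ) (l m : ℤ) (i i' : ℕ) :
    monA n l i * monA n m i' = monA n (l + m) (i + i') := by
  rw [monA, monA, monA, ← map_mul, mon, mon, mon, PowerSeries.monomial_mul_monomial,
    LaurentPolynomial.T_add]

lemma monA_zero (n : ℕ) (l : ℤ) (i : ℕ) (h : n < i) : monA n l i = 0 := by
  rw [monA, toA, Ideal.Quotient.eq_zero_iff_mem, In, Ideal.mem_span_singleton,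
    PowerSeries.X_pow_dvd_iff]
  intro m hm
  rw [mon, PowerSeries.coeff_monomial, if_neg (by omega)]

lemma monA_one (n : ℕ) : monA n 0 0 = 1 := by
  rw [monA, mon, LaurentPolynomial.T_zero, PowerSeries.monomial_zero_eq_C_apply, map_one, map_one]

/-- Span of monomials satisfying a predicate. -/
def Sg (n : ℕ) (P : ℤ → ℕ → Prop) : Submodule ℂ (Aq n) :=
  Submodule.span ℂ {x | ∃ l : ℤ, ∃ i : ℕ, P l i ∧ i ≤ n ∧ x = monA n l i}

lemma Sg_mul (n : ℕ) (P : ℤ → ℕ → Prop) (hP : ∀ l i m i', P l i → P m i' → P (l + m) (i + i'))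
    (x y : Aq n) (hx : x ∈ Sg n P) (hy : y ∈ Sg n P) : x * y ∈ Sg n P := by
  have h := Submodule.mul_mem_mul hx hy
  rw [Sg, Submodule.span_mul_span] at h
  refine Submodule.span_le.2 ?_ h
  rintro _ ⟨_, ⟨l, i, h1, h2, rfl⟩, _, ⟨m, i', h3, h4, rfl⟩, rfl⟩
  simp only [monA_mul]
  by_cases hi : i + i' ≤ n
  · exact Submodule.subset_span ⟨_, _, hP _ _ _ _ h1 h3, hi, rfl⟩
  · rw [monA_zero n _ _ (by omega)]
    exact Submodule.zero_mem _

/-- The span as a subalgebra. -/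
def SgA (n : ℕ) (P : ℤ → ℕ → Prop) (h0 : P 0 0)
    (hP : ∀ l i m i', P l i → P m i' → P (l + m) (i + i')) : Subalgebra ℂ (Aq n) :=
  (Sg n P).toSubalgebra (Submodule.subset_span ⟨0, 0, h0, Nat.zero_le _, (monA_one n).symm⟩)
    (Sg_mul n P hP)

lemma Sg_coeff (n : ℕ) (P : ℤ → ℕ → Prop) (l : ℤ) (hl : ¬ P l 0) (x : Aq n) (hx : x ∈ Sg n P) :
    coeffL l (epsA n x) = 0 := by
  induction hx using Submodule.span_induction with
  | mem x h =>
    obtain ⟨m, i, h1, -, rfl⟩ := h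
    rw [eps_monA]
    split_ifs with hi
    · rw [coeffL_T, if_neg]
      rintro rfl
      exact hl (hi ▸ h1)
    · exact map_zero _
  | zero => simp
  | add x y _ _ hx hy => rw [map_add, map_add, hx, hy, add_zero]
  | smul c x _ hx => rw [epsA_smul, map_smul, hx, smul_zero]

lemma nilp (n : ℕ) (x : Aq n) (hx : epsA n x = 0) : x ^ (n + 1) = 0 := by
  obtain ⟨p, rfl⟩ := toA_surj n x
  rw [epsA_toA] at hx
  rw [← map_pow, toA, Ideal.Quotient.eq_zero_iff_mem, In, Ideal.mem_span_singleton]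
  exact pow_dvd_pow_of_dvd (PowerSeries.X_dvd_iff.2 hx) _

lemma inv_mem (n : ℕ) (S : Subalgebra ℂ (Aq n)) (d : Aq n) (hd : d ∈ S) (c : ℂ) (hc : c ≠ 0)
    (he : epsA n d = c • 1) : ∃ w ∈ S, d * w = 1 := by
  set m : Aq n := 1 - c⁻¹ • d with hm
  have hmS : m ∈ S := S.sub_mem S.one_mem (S.smul_mem hd _)
  have hnil : m ^ (n + 1) = 0 := by
    apply nilp
    rw [hm, map_sub, map_one, epsA_smul, he, smul_smul, inv_mul_cancel₀ hc, one_smul, sub_self]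
  refine ⟨c⁻¹ • ∑ i ∈ Finset.range (n + 1), m ^ i,
    S.smul_mem (S.sum_mem fun i _ => S.pow_mem hmS i) _, ?_⟩
  have h := mul_neg_geom_sum m (n + 1)
  rw [hnil, sub_zero] at h
  rw [mul_smul_comm, ← smul_mul_assoc, ← h]
  congr 1
  rw [hm, sub_sub_cancel]

/-- for `j ≥ 1` and `D = diag(z^j, z^{−j})`, if `N` is a `2×2` matrix with entries
in `O_U` such that `D·N·D⁻¹` has entries in `O_V`, then (`det N` is a unit of `O_U` and
`det (D·N·D⁻¹)` is a unit of `O_V`) if and only if the coefficient of `z^0 u^0` in `det N` is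
nonzero. -/
theorem statement7 (k n : ℕ) (hk : 1 ≤ k) (hn : 1 ≤ n) (j : ℤ) (hj : 1 ≤ j)
    (N : Matrix (Fin 2) (Fin 2) (Aq n))
    (hN : ∀ a b : Fin 2, N a b ∈ OU n)
    (hconj : ∀ a b : Fin 2,
      (!![monA n j 0, 0; 0, monA n (-j) 0] * N * !![monA n (-j) 0, 0; 0, monA n j 0]) a b
        ∈ OV k n) :
    ((∃ w ∈ OU n, N.det * w = 1) ∧
      ∃ w ∈ OV k n,
        (!![monA n j 0, 0; 0, monA n (-j) 0] * N *
          !![monA n (-j) 0, 0; 0, monA n j 0]).det * w = 1) ↔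
      c00 n N.det ≠ 0 := by
  have hdet : (!![monA n j 0, 0; 0, monA n (-j) 0] * N *
          !![monA n (-j) 0, 0; 0, monA n j 0]).det = N.det := by
    have h1 : monA n j 0 * monA n (-j) 0 = 1 := by
      rw [monA_mul, add_neg_cancel, monA_one]
    rw [Matrix.det_mul, Matrix.det_mul, Matrix.det_fin_two_of, Matrix.det_fin_two_of]
    linear_combination (N.det * (monA n j 0 * monA n (-j) 0 + 1)) * h1
  let SU : Subalgebra ℂ (Aq n) := SgA n (fun l _ => 0 ≤ l) le_rfl
    (fun _ _ _ _ h h' => add_nonneg h h')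
  let SV : Subalgebra ℂ (Aq n) := SgA n (fun l i => l ≤ k * i) (by simp)
    (fun _ _ _ _ h h' => by push_cast; linarith)
  have hU : N.det ∈ SU := by
    rw [Matrix.det_fin_two]
    exact SU.sub_mem (SU.mul_mem (hN 0 0) (hN 1 1)) (SU.mul_mem (hN 0 1) (hN 1 0))
  have hV : N.det ∈ SV := by
    rw [← hdet, Matrix.det_fin_two]
    exact SV.sub_mem (SV.mul_mem (hconj 0 0) (hconj 1 1)) (SV.mul_mem (hconj 0 1) (hconj 1 0))
  have he : epsA n N.det = c00 n N.det • 1 := by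
    apply Lz_ext
    intro l
    rw [map_smul, ← LaurentPolynomial.T_zero, coeffL_T, c00_eq]
    rcases lt_trichotomy l 0 with h | h | h
    · rw [if_neg (by omega), smul_zero]
      exact Sg_coeff n (fun l _ => 0 ≤ l) l (by simpa using h) _ hU
    · subst h
      simp
    · rw [if_neg (by omega), smul_zero]
      exact Sg_coeff n (fun l i => l ≤ k * i) l (by simpa using h) _ hV
  rw [hdet]
  constructor
  · rintro ⟨⟨w, -, hw⟩, -⟩ h0
    have := congrArg (epsA n) hw
    rw [map_mul, he, h0, zero_smul, zero_mul, map_one] at this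
    exact zero_ne_one this
  · intro hc
    exact ⟨inv_mem n SU _ hU _ hc he, inv_mem n SV _ hV _ hc he⟩
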